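/- arXiv:2212.11722 — 2 statements merged into one kernel-verified Lean document; each statement's English description precedes it below -/
import Mathlib

section
/- Let γ ∈ [0,2), d := 2(γ+1)/(2−γ), and let n be a real number with n > 2 and n ≥ 2d. Let b̃ over (ℕ₀, m̃) be the one-dimensional graph associated with the γ-anti-tree, with intrinsic degree path metric ρ̃ and closed balls B̃_k(r). Then there exists C ≥ 1 such that for every x in the γ-anti-tree and every r ≥ max(1, ρ̃(0,|x|)): C⁻¹ · m̃(B̃_{|x|}(r))^{2/n} / r ≤ h̃_{B̃_{|x|}(r), n} ≤ C · m̃(B̃_{|x|}(r))^{2/n} / r, where h̃_{U,n} := inf { (b̃ρ̃)(∂W) / m̃(W)^{(n−2)/n} : W ⊆ U finite nonempty }. -/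
open scoped BigOperators

/-- Vertex set of the anti-tree with sphere function `s`:
the `k`-th sphere has `s k` elements. -/
def AntiTree (s : ℕ → ℕ) : Type := Σ k : ℕ, Fin (s k)

namespace AntiTree

/-- Standard edge weights of the anti-tree: consecutive spheres are completely connected,
and there are no other edges. -/
def wt (s : ℕ → ℕ) (x y : AntiTree s) : ℝ :=
  if x.1 + 1 = y.1 ∨ y.1 + 1 = x.1 then 1 else 0

/-- Weighted vertex degree with respect to the counting measure `m ≡ 1`. -/
noncomputable def Deg (s : ℕ → ℕ) (x : AntiTree s) : ℝ := ∑' y : AntiTree s, wt s x y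

end AntiTree

/-- Intrinsic degree path (pseudo-)metric of a weighted graph `b` whose weighted degree
function is `D`:  `ρ(x,y)` is the infimum over finite paths from `x` to `y` of
`∑_j min(1/D(x_j), 1/D(x_{j+1}))^{1/2}`. -/
noncomputable def pathMetric {X : Type*} (b : X → X → ℝ) (D : X → ℝ) (x y : X) : ℝ :=
  sInf { L : ℝ | ∃ (k : ℕ) (p : ℕ → X), p 0 = x ∧ p k = y ∧
    (∀ j < k, 0 < b (p j) (p (j + 1))) ∧
    L = ∑ j ∈ Finset.range k, Real.sqrt (min (1 / D (p j)) (1 / D (p (j + 1)))) }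

/-- The intrinsic degree path metric of the anti-tree. -/
noncomputable def AntiTree.rho (s : ℕ → ℕ) : AntiTree s → AntiTree s → ℝ :=
  pathMetric (AntiTree.wt s) (AntiTree.Deg s)

/-- Closed balls with respect to the intrinsic degree path metric. -/
noncomputable def AntiTree.ball (s : ℕ → ℕ) (x : AntiTree s) (r : ℝ) : Set (AntiTree s) :=
  {y | AntiTree.rho s x y ≤ r}

/-- The sphere function of the `γ`-anti-tree: `s (k-1) = ⌊k ^ γ⌋` for `k ≥ 1`,
i.e. `s k = ⌊(k+1) ^ γ⌋`. -/
noncomputable def gammaSphere (γ : ℝ) : ℕ → ℕ := fun k => ⌊((k : ℝ) + 1) ^ γ⌋₊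
namespace OneDim

/-- Measure of the one-dimensional graph associated with an anti-tree. -/
noncomputable def m (s : ℕ → ℕ) (k : ℕ) : ℝ := (s k : ℝ)

/-- Edge weights of the one-dimensional graph associated with an anti-tree. -/
noncomputable def wt (s : ℕ → ℕ) (k l : ℕ) : ℝ :=
  if k + 1 = l ∨ l + 1 = k then (s k : ℝ) * (s l : ℝ) else 0

/-- Weighted vertex degree of the one-dimensional graph. -/
noncomputable def Deg (s : ℕ → ℕ) (k : ℕ) : ℝ := (1 / m s k) * ∑' l : ℕ, wt s k l

/-- Intrinsic degree path metric of the one-dimensional graph. -/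
noncomputable def rho (s : ℕ → ℕ) : ℕ → ℕ → ℝ := pathMetric (wt s) (Deg s)

/-- Closed balls of the one-dimensional graph. -/
noncomputable def ball (s : ℕ → ℕ) (k : ℕ) (r : ℝ) : Set ℕ := {l | rho s k l ≤ r}

/-- Measure of a subset of the one-dimensional graph. -/
noncomputable def vol (s : ℕ → ℕ) (A : Set ℕ) : ℝ := ∑' l : ℕ, Set.indicator A (m s) l

end OneDim
/-- `(bρ)(∂W)`: the weighted boundary measure of a set `W`, i.e. the sum of
`b(x,y) ρ(x,y)` over all ordered pairs with exactly one of `x,y` in `W`. -/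
noncomputable def boundarySum {X : Type*} (b ρ : X → X → ℝ) (W : Set X) : ℝ :=
  ∑' p : X × X,
    Set.indicator {q : X × X | (q.1 ∈ W ∧ q.2 ∉ W) ∨ (q.1 ∉ W ∧ q.2 ∈ W)}
      (fun q => b q.1 q.2 * ρ q.1 q.2) p

/-- The isoperimetric constant `h_{U,n}`: the infimum of `(bρ)(∂W) / m(W)^{(n-2)/n}`
over finite nonempty subsets `W ⊆ U`. -/
noncomputable def isoConst {X : Type*} (b ρ : X → X → ℝ) (m : X → ℝ) (U : Set X) (n : ℝ) : ℝ :=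
  sInf { h : ℝ | ∃ W : Finset X, ↑W ⊆ U ∧ W.Nonempty ∧
    h = boundarySum b ρ ↑W / (∑ x ∈ W, m x) ^ ((n - 2) / n) }

/-!
The one-dimensional graph is a path, so `ρ̃(k, l) = |H k - H l|`, where the height `H k = ρ̃(0, k)`
is the sum of the lengths of the first `k` edges.  Whenever `H` is unbounded, a ball whose radius
`r ≥ 1` reaches the root is an initial segment `{0, …, N}` with `r ≤ H (N + 1) ≤ 3 r`.  A finite
set with maximum `K` has at least the boundary and at most the measure of `{0, …, K}`, so `h̃` of an
initial segment is the minimum of the isoperimetric ratios of the smaller initial segments.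

If `s k ≍ (k + 1) ^ γ`, then `H (N + 1) ≍ (N + 1) ^ (1 - γ / 2)`, the measure of
`{0, …, N}` is `≍ (N + 1) ^ (γ + 1)`, and its isoperimetric ratio is `≍ (N + 1) ^ β` with
`β = (γ + 1) (2 / n) - (1 - γ / 2)`.  The condition `n ≥ 2 d` says exactly that `β ≤ 0`, so that the
minimum is attained, up to a constant, by `{0, …, N}` itself.
-/

section PowerGrowth

open Filter Asymptotics

lemma isTheta_of_mul_le_of_le_mul {α : Type*} {l : Filter α} {f g : α → ℝ} {a b : ℝ} (ha : 0 < a)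
    (hg : ∀ᶠ x in l, 0 ≤ g x) (hle : ∀ᶠ x in l, a * g x ≤ f x) (hge : ∀ᶠ x in l, f x ≤ b * g x) :
    f =Θ[l] g := by
  have hf : ∀ᶠ x in l, 0 ≤ f x := by
    filter_upwards [hg, hle] with x hgx hx using (mul_nonneg ha.le hgx).trans hx
  refine ⟨.of_bound b ?_, .of_bound a⁻¹ ?_⟩
  · filter_upwards [hf, hg, hge] with x hfx hgx hx
    rwa [Real.norm_of_nonneg hfx, Real.norm_of_nonneg hgx]
  · filter_upwards [hf, hg, hle] with x hfx hgx hx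
    rwa [Real.norm_of_nonneg hfx, Real.norm_of_nonneg hgx, le_inv_mul_iff₀ ha]

lemma exists_one_le_inv_mul_le_and_le_mul {α : Type*} {f g : α → ℝ} (hf : ∀ x, 0 ≤ f x)
    (hg : ∀ x, 0 ≤ g x) (h : f =Θ[⊤] g) :
    ∃ C : ℝ, 1 ≤ C ∧ ∀ x, C⁻¹ * g x ≤ f x ∧ f x ≤ C * g x := by
  obtain ⟨a, ha⟩ := isBigO_top.1 h.1
  obtain ⟨b, hb⟩ := isBigO_top.1 h.2
  simp only [Real.norm_of_nonneg (hf _), Real.norm_of_nonneg (hg _)] at ha hb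
  have hC : 1 ≤ max 1 (max a b) := le_max_left _ _
  refine ⟨max 1 (max a b), hC, fun x => ⟨?_, (ha x).trans ?_⟩⟩
  · rw [inv_mul_le_iff₀ (one_pos.trans_le hC)]
    exact (hb x).trans (mul_le_mul_of_nonneg_right (by simp) (hf x))
  · exact mul_le_mul_of_nonneg_right (by simp) (hg x)

lemma isTheta_comp_tendsto {α β : Type*} {l : Filter α} {l' : Filter β} {f g : α → ℝ}
    (h : f =Θ[l] g) {k : β → α} (hk : Tendsto k l' l) :
    (fun x => f (k x)) =Θ[l'] fun x => g (k x) :=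
  ⟨h.1.comp_tendsto hk, h.2.comp_tendsto hk⟩

lemma isTheta_min {α : Type*} {l : Filter α} {f g h : α → ℝ} (hf : f =Θ[l] h) (hg : g =Θ[l] h) :
    (fun x => min (f x) (g x)) =Θ[l] h := by
  have hl : l = l ⊓ 𝓟 {x | f x ≤ g x} ⊔ l ⊓ 𝓟 {x | f x ≤ g x}ᶜ := by
    rw [← inf_sup_left, sup_principal, Set.union_compl_self, principal_univ, inf_top_eq]
  rw [hl, isTheta_sup]
  constructor
  · have hmin : (fun x => min (f x) (g x)) =ᶠ[l ⊓ 𝓟 {x | f x ≤ g x}] f :=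
      eventually_inf_principal.2 (.of_forall fun x hx => min_eq_left hx)
    exact hmin.trans_isTheta (hf.mono inf_le_left)
  · have hmin : (fun x => min (f x) (g x)) =ᶠ[l ⊓ 𝓟 {x | f x ≤ g x}ᶜ] g :=
      eventually_inf_principal.2 <| .of_forall fun x hx =>
        min_eq_right (not_le.1 ((Set.mem_compl_iff _ _).1 hx)).le
    exact hmin.trans_isTheta (hg.mono inf_le_left)

lemma isTheta_sum {ι : Type*} {u v : ι → ℝ} (hu : ∀ i, 0 ≤ u i) (hv : ∀ i, 0 ≤ v i)
    (h : u =Θ[⊤] v) :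
    (fun t : Finset ι => ∑ i ∈ t, u i) =Θ[⊤] fun t => ∑ i ∈ t, v i := by
  have hO {u v : ι → ℝ} (hv : ∀ i, 0 ≤ v i) (h : u =O[⊤] v) :
      (fun t : Finset ι => ∑ i ∈ t, u i) =O[⊤] fun t => ∑ i ∈ t, v i := by
    obtain ⟨C, hC⟩ := isBigO_top.1 h
    refine isBigO_top.2 ⟨C, fun t => ?_⟩
    rw [Real.norm_of_nonneg (Finset.sum_nonneg fun i _ => hv i), Finset.mul_sum]
    exact norm_sum_le_of_le t fun i _ => (hC i).trans_eq (by rw [Real.norm_of_nonneg (hv i)])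
  exact ⟨hO hv h.1, hO hu h.2⟩

/-- For `q ≤ 1` one bound is Bernoulli's inequality and the other is `1 - t ≤ (1 - t) ^ q`;
for `q ≥ 1` both are reversed. -/
lemma one_sub_one_sub_rpow_isTheta {q : ℝ} (hq : 0 < q) :
    (fun t : ℝ => 1 - (1 - t) ^ q) =Θ[𝓟 (Set.Icc 0 1)] fun t => t := by
  refine isTheta_of_mul_le_of_le_mul (a := min 1 q) (b := max 1 q) (lt_min one_pos hq) ?_ ?_ ?_ <;>
    rw [eventually_principal] <;> rintro t ⟨ht0, ht1⟩
  · exact ht0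
  · rcases le_total q 1 with h | h
    · have := rpow_one_add_le_one_add_mul_self (s := -t) (by linarith) hq.le h
      rw [← sub_eq_add_neg] at this
      rw [min_eq_right h]
      linarith
    · have := Real.rpow_le_rpow_of_exponent_ge' (sub_nonneg.2 ht1) (by linarith) one_pos.le h
      rw [Real.rpow_one] at this
      rw [min_eq_left h]
      linarith
  · rcases le_total q 1 with h | h
    · have := Real.rpow_le_rpow_of_exponent_ge' (sub_nonneg.2 ht1) (by linarith) hq.le h
      rw [Real.rpow_one] at this
      rw [max_eq_left h]
      linarith
    · have := one_add_mul_self_le_rpow_one_add (s := -t) (by linarith) h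
      rw [← sub_eq_add_neg] at this
      rw [max_eq_right h]
      linarith

/-- The sequence `u` is comparable to `(k + 1) ^ p`.  Comparability along the filter `⊤` means that
both bounds hold for every `k`, not only for large `k`; in particular `u` does not vanish. -/
def HasPowerGrowth (u : ℕ → ℝ) (p : ℝ) : Prop :=
  u =Θ[⊤] fun k => ((k : ℝ) + 1) ^ p

namespace HasPowerGrowth

variable {u v : ℕ → ℝ} {p q : ℝ}

lemma mul (hu : HasPowerGrowth u p) (hv : HasPowerGrowth v q) :
    HasPowerGrowth (fun k => u k * v k) (p + q) := by
  simp only [HasPowerGrowth, Real.rpow_add (Nat.cast_add_one_pos (α := ℝ) _)]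
  exact IsTheta.mul hu hv

lemma div (hu : HasPowerGrowth u p) (hv : HasPowerGrowth v q) :
    HasPowerGrowth (fun k => u k / v k) (p - q) := by
  simp only [HasPowerGrowth, Real.rpow_sub (Nat.cast_add_one_pos (α := ℝ) _)]
  exact IsTheta.div hu hv

lemma const_mul (hu : HasPowerGrowth u p) {c : ℝ} (hc : c ≠ 0) :
    HasPowerGrowth (fun k => c * u k) p :=
  (isTheta_const_mul_left hc).2 hu

lemma one_div (hu : HasPowerGrowth u p) : HasPowerGrowth (fun k => 1 / u k) (-p) := by
  simp only [HasPowerGrowth, Real.rpow_neg (Nat.cast_add_one_pos (α := ℝ) _).le, _root_.one_div]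
  exact IsTheta.inv hu

lemma rpow (hu : HasPowerGrowth u p) (hu0 : ∀ k, 0 ≤ u k) (q : ℝ) :
    HasPowerGrowth (fun k => u k ^ q) (p * q) := by
  simp only [HasPowerGrowth, Real.rpow_mul (Nat.cast_add_one_pos (α := ℝ) _).le]
  exact IsTheta.rpow (.of_forall hu0) (.of_forall fun k => by positivity) hu

lemma sqrt (hu : HasPowerGrowth u p) (hu0 : ∀ k, 0 ≤ u k) :
    HasPowerGrowth (fun k => √(u k)) (p / 2) := by
  simpa only [Real.sqrt_eq_rpow, mul_one_div] using hu.rpow hu0 (1 / 2)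

lemma min (hu : HasPowerGrowth u p) (hv : HasPowerGrowth v p) :
    HasPowerGrowth (fun k => min (u k) (v k)) p :=
  isTheta_min hu hv

lemma comp_of_le_of_le (hu : HasPowerGrowth u p) {f : ℕ → ℕ} (hle : ∀ k, f k ≤ k + 1)
    (hge : ∀ k, k ≤ f k + 1) : HasPowerGrowth (fun k => u (f k)) p := by
  have hf : (fun k => (f k : ℝ) + 1) =Θ[⊤] fun k : ℕ => (k : ℝ) + 1 := by
    refine isTheta_of_mul_le_of_le_mul (a := 1 / 2) (b := 2) (by norm_num)
      (.of_forall fun k => by positivity) (.of_forall fun k => ?_) (.of_forall fun k => ?_)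
    · have : (k : ℝ) ≤ f k + 1 := by exact_mod_cast hge k
      linarith [Nat.cast_nonneg (α := ℝ) (f k)]
    · have : (f k : ℝ) ≤ k + 1 := by exact_mod_cast hle k
      linarith [Nat.cast_nonneg (α := ℝ) k]
  have hcomp : (fun k => u (f k)) =Θ[⊤] fun k => ((f k : ℝ) + 1) ^ p :=
    isTheta_comp_tendsto hu tendsto_top
  exact hcomp.trans
    (hf.rpow (.of_forall fun k => by positivity) (.of_forall fun k => by positivity))

lemma succ (hu : HasPowerGrowth u p) : HasPowerGrowth (fun k => u (k + 1)) p :=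
  hu.comp_of_le_of_le (fun _ => le_rfl) fun _ => by omega

lemma ne_zero (hu : HasPowerGrowth u p) (k : ℕ) : u k ≠ 0 := by
  have h := (eventually_top.1 hu.eq_zero_iff k).not
  exact h.2 (Real.rpow_pos_of_pos k.cast_add_one_pos p).ne'

lemma exponent_nonneg (hu : HasPowerGrowth u p) (hu1 : ∀ k, 1 ≤ u k) : 0 ≤ p := by
  by_contra! hp
  have hpow : Tendsto (fun k : ℕ => ((k : ℝ) + 1) ^ p) atTop (nhds 0) := by
    have hneg := (tendsto_rpow_neg_atTop (neg_pos.2 hp)).comp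
      (tendsto_natCast_atTop_atTop.atTop_add (tendsto_const_nhds (x := (1 : ℝ))))
    rw [neg_neg] at hneg
    exact hneg
  have hu0 : Tendsto u atTop (nhds 0) := (hu.1.mono le_top).trans_tendsto hpow
  exact absurd (ge_of_tendsto' hu0 hu1) (by norm_num)

lemma tendsto_atTop (hu : HasPowerGrowth u p) (hu0 : ∀ k, 0 ≤ u k) (hp : 0 < p) :
    Tendsto u atTop atTop := by
  have hpow : Tendsto (fun k : ℕ => ((k : ℝ) + 1) ^ p) atTop atTop :=
    (tendsto_rpow_atTop hp).comp (tendsto_natCast_atTop_atTop.atTop_add tendsto_const_nhds)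
  have hnorm := (hu.mono le_top).tendsto_norm_atTop_iff.2 (tendsto_norm_atTop_atTop.comp hpow)
  exact hnorm.congr fun k => Real.norm_of_nonneg (hu0 k)

lemma rpow_succ_sub_rpow (hq : 0 < q) :
    HasPowerGrowth (fun k => ((k : ℝ) + 1) ^ q - (k : ℝ) ^ q) (q - 1) := by
  have hmem (k : ℕ) : 1 / ((k : ℝ) + 1) ∈ Set.Icc (0 : ℝ) 1 :=
    ⟨by positivity, div_le_one_of_le₀ (by simp) (by positivity)⟩
  have htend : Tendsto (fun k : ℕ => 1 / ((k : ℝ) + 1)) ⊤ (𝓟 (Set.Icc 0 1)) :=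
    tendsto_principal.2 (.of_forall hmem)
  have hdiff : (fun k : ℕ => 1 - (1 - 1 / ((k : ℝ) + 1)) ^ q) =Θ[⊤] fun k => 1 / ((k : ℝ) + 1) :=
    isTheta_comp_tendsto (one_sub_one_sub_rpow_isTheta hq) htend
  have hmul := (isTheta_refl (fun k : ℕ => ((k : ℝ) + 1) ^ q) ⊤).mul hdiff
  refine (EventuallyEq.of_eq ?_).trans_isTheta (hmul.trans_eventuallyEq (.of_eq ?_)) <;> ext k
  · have hk : 1 - 1 / ((k : ℝ) + 1) = k / (k + 1) := by field_simp; ring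
    rw [hk, Real.div_rpow k.cast_nonneg (by positivity)]
    field_simp
  · rw [Real.rpow_sub_one (by positivity), mul_one_div]

lemma sum_range_succ (hu : HasPowerGrowth u p) (hu0 : ∀ k, 0 ≤ u k) (hp : -1 < p) :
    HasPowerGrowth (fun N => ∑ k ∈ Finset.range (N + 1), u k) (p + 1) := by
  have hp1 : 0 < p + 1 := by linarith
  have hdiff := rpow_succ_sub_rpow hp1
  rw [add_sub_cancel_right] at hdiff
  have hsum := isTheta_sum hu0
    (fun k : ℕ => sub_nonneg.2 (Real.rpow_le_rpow k.cast_nonneg (by linarith) hp1.le))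
    (IsTheta.trans hu (IsTheta.symm hdiff))
  have hrange :=
    isTheta_comp_tendsto (k := fun N => Finset.range (N + 1)) (l' := ⊤) hsum tendsto_top
  refine IsTheta.trans_eventuallyEq hrange (.of_eq (funext fun N => ?_))
  have htele := Finset.sum_range_sub (fun k : ℕ => (k : ℝ) ^ (p + 1)) (N + 1)
  push_cast at htele
  rw [htele, Real.zero_rpow hp1.ne', sub_zero]

lemma inf'_range_succ (hu : HasPowerGrowth u p) (hu0 : ∀ k, 0 ≤ u k) (hp : p ≤ 0) :
    HasPowerGrowth (fun N => (Finset.range (N + 1)).inf' Finset.nonempty_range_add_one u) p := by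
  obtain ⟨C, hC, h⟩ := exists_one_le_inv_mul_le_and_le_mul hu0 (fun k => by positivity) hu
  have hC0 : 0 < C⁻¹ := by positivity
  refine isTheta_of_mul_le_of_le_mul (b := C) hC0 (.of_forall fun N => by positivity)
    (.of_forall fun N => ?_) (.of_forall fun N => ?_)
  · refine Finset.le_inf' _ _ fun k hk => le_trans ?_ (h k).1
    have hkN : (k : ℝ) ≤ N := by exact_mod_cast Finset.mem_range_succ_iff.1 hk
    exact mul_le_mul_of_nonneg_left
      (Real.rpow_le_rpow_of_nonpos k.cast_add_one_pos (by linarith) hp) hC0.le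
  · exact (Finset.inf'_le _ (Finset.self_mem_range_succ N)).trans (h N).2

end HasPowerGrowth

end PowerGrowth

section PathMetric

variable {X : Type*} {b : X → X → ℝ} {D : X → ℝ} {p : ℕ → X} {k : ℕ}

lemma pathMetric_le_sum (hp : ∀ j < k, 0 < b (p j) (p (j + 1))) :
    pathMetric b D (p 0) (p k) ≤
      ∑ j ∈ Finset.range k, √(min (1 / D (p j)) (1 / D (p (j + 1)))) := by
  refine csInf_le ⟨0, ?_⟩ ⟨k, p, rfl, rfl, hp, rfl⟩
  rintro L ⟨k, p, -, -, -, rfl⟩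
  exact Finset.sum_nonneg fun j _ => Real.sqrt_nonneg _

lemma dist_le_pathMetric {E : Type*} [PseudoMetricSpace E] {f : X → E}
    (hf : ∀ x y, 0 < b x y → dist (f x) (f y) ≤ √(min (1 / D x) (1 / D y)))
    (hp : ∀ j < k, 0 < b (p j) (p (j + 1))) :
    dist (f (p 0)) (f (p k)) ≤ pathMetric b D (p 0) (p k) := by
  refine le_csInf ⟨_, k, p, rfl, rfl, hp, rfl⟩ ?_
  rintro L ⟨l, q, hq0, hql, hq, rfl⟩
  rw [← hq0, ← hql]
  exact dist_le_range_sum_of_dist_le (f := fun j => f (q j)) l fun hj => hf _ _ (hq _ hj)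

lemma pathMetric_comm (hb : ∀ x y, b x y = b y x) (x y : X) :
    pathMetric b D x y = pathMetric b D y x := by
  have hrev {x y : X} {L : ℝ} : (∃ (k : ℕ) (p : ℕ → X), p 0 = x ∧ p k = y ∧
      (∀ j < k, 0 < b (p j) (p (j + 1))) ∧
      L = ∑ j ∈ Finset.range k, √(min (1 / D (p j)) (1 / D (p (j + 1))))) →
      ∃ (k : ℕ) (p : ℕ → X), p 0 = y ∧ p k = x ∧ (∀ j < k, 0 < b (p j) (p (j + 1))) ∧
      L = ∑ j ∈ Finset.range k, √(min (1 / D (p j)) (1 / D (p (j + 1)))) := by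
    rintro ⟨k, p, h0, hk, hp, rfl⟩
    have hsucc {j : ℕ} (hj : j < k) : k - j = k - 1 - j + 1 ∧ k - (j + 1) = k - 1 - j := by omega
    refine ⟨k, fun j => p (k - j), hk, by simpa using h0, fun j hj => ?_, ?_⟩
    · simp only [hsucc hj]
      rw [hb]
      exact hp _ (by omega)
    · rw [← Finset.sum_range_reflect]
      refine Finset.sum_congr rfl fun j hj => ?_
      simp only [hsucc (Finset.mem_range.1 hj)]
      rw [min_comm]
  exact congrArg sInf (Set.ext fun L => ⟨hrev, hrev⟩)

end PathMetric

namespace OneDim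

open Filter Asymptotics

variable {s : ℕ → ℕ}

/-- Length of the edge between `k` and `k + 1` in the intrinsic degree path metric. -/
noncomputable def edgeLength (s : ℕ → ℕ) (k : ℕ) : ℝ :=
  √(min (1 / Deg s k) (1 / Deg s (k + 1)))

/-- Length of the straight path from `0` to `k`, which is the distance of `k` from the root. -/
noncomputable def height (s : ℕ → ℕ) (k : ℕ) : ℝ := ∑ j ∈ Finset.range k, edgeLength s j

/-- Weighted length `b̃ρ̃` of the edge between `k` and `k + 1`, counted in one direction only. -/
noncomputable def cutWeight (s : ℕ → ℕ) (k : ℕ) : ℝ := m s k * m s (k + 1) * edgeLength s k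

/-- Isoperimetric ratio `(b̃ρ̃)(∂W) / m̃(W) ^ ((n - 2) / n)` of the initial segment
`W = {0, …, N}`. -/
noncomputable def segmentRatio (s : ℕ → ℕ) (n : ℝ) (N : ℕ) : ℝ :=
  2 * cutWeight s N / (∑ k ∈ Finset.range (N + 1), m s k) ^ ((n - 2) / n)

lemma m_nonneg (s : ℕ → ℕ) (k : ℕ) : 0 ≤ m s k := Nat.cast_nonneg _

lemma edgeLength_nonneg (s : ℕ → ℕ) (k : ℕ) : 0 ≤ edgeLength s k := Real.sqrt_nonneg _

lemma height_succ (s : ℕ → ℕ) (k : ℕ) : height s (k + 1) = height s k + edgeLength s k :=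
  Finset.sum_range_succ _ _

lemma height_monotone (s : ℕ → ℕ) : Monotone (height s) :=
  monotone_nat_of_le_succ fun k => by
    rw [height_succ]
    exact le_add_of_nonneg_right (edgeLength_nonneg s k)

lemma height_nonneg (s : ℕ → ℕ) (k : ℕ) : 0 ≤ height s k :=
  Finset.sum_nonneg fun j _ => edgeLength_nonneg s j

lemma cutWeight_nonneg (s : ℕ → ℕ) (k : ℕ) : 0 ≤ cutWeight s k :=
  mul_nonneg (mul_nonneg (m_nonneg s _) (m_nonneg s _)) (edgeLength_nonneg s k)

lemma segmentRatio_nonneg (s : ℕ → ℕ) (n : ℝ) (N : ℕ) : 0 ≤ segmentRatio s n N :=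
  div_nonneg (mul_nonneg zero_le_two (cutWeight_nonneg s N))
    (Real.rpow_nonneg (Finset.sum_nonneg fun k _ => m_nonneg s k) _)

lemma wt_nonneg (s : ℕ → ℕ) (k l : ℕ) : 0 ≤ wt s k l := by
  unfold wt
  split_ifs <;> positivity

lemma wt_comm (s : ℕ → ℕ) (k l : ℕ) : wt s k l = wt s l k := by
  simp only [wt, or_comm, mul_comm]

lemma wt_self_succ (s : ℕ → ℕ) (k : ℕ) : wt s k (k + 1) = m s k * m s (k + 1) := by simp [wt, m]

lemma wt_eq_zero {k l : ℕ} (h : ¬(k + 1 = l ∨ l + 1 = k)) : wt s k l = 0 := if_neg h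

lemma wt_self_succ_pos (hs : ∀ k, 0 < s k) (k : ℕ) : 0 < wt s k (k + 1) := by
  rw [wt_self_succ, m, m]
  exact_mod_cast Nat.mul_pos (hs k) (hs (k + 1))

lemma dist_height_self_succ (s : ℕ → ℕ) (k : ℕ) :
    dist (height s k) (height s (k + 1)) = edgeLength s k := by
  rw [height_succ, dist_self_add_right, Real.norm_of_nonneg (edgeLength_nonneg s k)]

lemma dist_height_le_of_wt_pos {k l : ℕ} (h : 0 < wt s k l) :
    dist (height s k) (height s l) ≤ √(min (1 / Deg s k) (1 / Deg s l)) := by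
  rcases not_not.1 (mt wt_eq_zero h.ne') with rfl | rfl
  · exact (dist_height_self_succ s k).le
  · rw [dist_comm, min_comm]
    exact (dist_height_self_succ s l).le

lemma rho_comm (s : ℕ → ℕ) (k l : ℕ) : rho s k l = rho s l k :=
  pathMetric_comm (wt_comm s) k l

lemma rho_of_le (hs : ∀ k, 0 < s k) {k l : ℕ} (h : k ≤ l) :
    rho s k l = height s l - height s k := by
  obtain ⟨d, rfl⟩ := Nat.exists_eq_add_of_le h
  have hpath : ∀ j < d, 0 < wt s (k + j) (k + (j + 1)) := fun j _ => wt_self_succ_pos hs (k + j)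
  refine le_antisymm ?_ ?_
  · have hsum := Finset.sum_range_sub (fun j => height s (k + j)) d
    simp only [← add_assoc, height_succ, add_sub_cancel_left, add_zero] at hsum
    exact (pathMetric_le_sum hpath).trans_eq hsum
  · have hdist := dist_le_pathMetric (f := height s) (D := Deg s)
      (fun _ _ => dist_height_le_of_wt_pos) hpath
    rw [dist_comm] at hdist
    exact (le_abs_self _).trans hdist

lemma rho_eq_abs_height_sub (hs : ∀ k, 0 < s k) (k l : ℕ) :
    rho s k l = |height s k - height s l| := by
  rcases le_total k l with h | h
  · rw [rho_of_le hs h, abs_sub_comm, abs_of_nonneg (sub_nonneg.2 (height_monotone s h))]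
  · rw [rho_comm, rho_of_le hs h, abs_of_nonneg (sub_nonneg.2 (height_monotone s h))]

lemma rho_nonneg (hs : ∀ k, 0 < s k) (k l : ℕ) : 0 ≤ rho s k l := by
  rw [rho_eq_abs_height_sub hs]
  exact abs_nonneg _

lemma rho_zero_left (hs : ∀ k, 0 < s k) (k : ℕ) : rho s 0 k = height s k := by
  rw [rho_of_le hs k.zero_le, height, height, Finset.sum_range_zero, sub_zero]

lemma wt_mul_rho_self_succ (hs : ∀ k, 0 < s k) (k : ℕ) :
    wt s k (k + 1) * rho s k (k + 1) = cutWeight s k := by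
  rw [wt_self_succ, rho_of_le hs k.le_succ, height_succ, add_sub_cancel_left, cutWeight]

lemma wt_mul_rho_succ_self (hs : ∀ k, 0 < s k) (k : ℕ) :
    wt s (k + 1) k * rho s (k + 1) k = cutWeight s k := by
  rw [wt_comm, rho_comm, wt_mul_rho_self_succ hs]

lemma Deg_zero (hs : 0 < s 0) : Deg s 0 = m s 1 := by
  have h0 : m s 0 ≠ 0 := Nat.cast_ne_zero.2 hs.ne'
  rw [Deg, tsum_eq_single 1 fun l hl => wt_eq_zero (by omega), wt_self_succ]
  field_simp

lemma Deg_succ {k : ℕ} (hs : 0 < s (k + 1)) : Deg s (k + 1) = m s k + m s (k + 2) := by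
  have h0 : m s (k + 1) ≠ 0 := Nat.cast_ne_zero.2 hs.ne'
  have hsupp : ∀ l ∉ ({k, k + 2} : Finset ℕ), wt s (k + 1) l = 0 := fun l hl =>
    wt_eq_zero (by simp only [Finset.mem_insert, Finset.mem_singleton] at hl; omega)
  rw [Deg, tsum_eq_sum hsupp, Finset.sum_pair (by omega), wt_comm, wt_self_succ, wt_self_succ]
  field_simp

lemma m_succ_le_Deg {k : ℕ} (hs : 0 < s k) : m s (k + 1) ≤ Deg s k := by
  cases k with
  | zero => exact (Deg_zero hs).ge
  | succ k => exact (le_add_of_nonneg_left (m_nonneg s k)).trans_eq (Deg_succ hs).symm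

/-- At `k = 0` the truncated subtraction adds the harmless term `m s 0`. -/
lemma Deg_le {k : ℕ} (hs : 0 < s k) : Deg s k ≤ m s (k - 1) + m s (k + 1) := by
  cases k with
  | zero => exact (Deg_zero hs).le.trans (le_add_of_nonneg_left (m_nonneg s _))
  | succ k => exact (Deg_succ hs).le

lemma one_le_m {k : ℕ} (hs : 0 < s k) : 1 ≤ m s k := Nat.one_le_cast.2 hs

lemma one_le_Deg (hs : ∀ k, 0 < s k) (k : ℕ) : 1 ≤ Deg s k :=
  (one_le_m (hs _)).trans (m_succ_le_Deg (hs k))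

lemma edgeLength_le_one (hs : ∀ k, 0 < s k) (k : ℕ) : edgeLength s k ≤ 1 :=
  Real.sqrt_le_one.2 <| (min_le_left _ _).trans (div_le_one_of_le₀ (one_le_Deg hs k)
    (zero_le_one.trans (one_le_Deg hs k)))

lemma exists_height_le_and_lt_height_succ (hH : Tendsto (height s) atTop atTop) {R : ℝ}
    (hR : 0 ≤ R) : ∃ N, height s N ≤ R ∧ R < height s (N + 1) := by
  classical
  have hex : ∃ M, R < height s M := (hH.eventually_gt_atTop R).exists
  obtain ⟨N, hN⟩ : ∃ N, Nat.find hex = N + 1 :=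
    Nat.exists_eq_succ_of_ne_zero ((Nat.find_pos hex).2 (by simpa [height] using hR)).ne'
  refine ⟨N, not_lt.1 (Nat.find_min hex (by omega)), ?_⟩
  rw [← hN]
  exact Nat.find_spec hex

lemma exists_ball_eq_range (hs : ∀ k, 0 < s k) (hH : Tendsto (height s) atTop atTop) {k : ℕ}
    {r : ℝ} (hr1 : 1 ≤ r) (hr : rho s 0 k ≤ r) :
    ∃ N : ℕ, ball s k r = ↑(Finset.range (N + 1)) ∧ r ≤ height s (N + 1) ∧
      height s (N + 1) ≤ 3 * r := by
  rw [rho_zero_left hs] at hr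
  have hk := height_nonneg s k
  obtain ⟨N, hN, hN'⟩ := exists_height_le_and_lt_height_succ hH (R := height s k + r) (by linarith)
  refine ⟨N, Set.ext fun l => ?_, by linarith, ?_⟩
  · rw [ball, Set.mem_ofPred_eq, rho_eq_abs_height_sub hs, abs_le, Finset.mem_coe,
      Finset.mem_range]
    refine ⟨fun hl => (height_monotone s).reflect_lt (by linarith [hl.1]), fun hl => ?_⟩
    exact ⟨by linarith [height_monotone s (Nat.lt_succ_iff.1 hl)], by linarith [height_nonneg s l]⟩
  · rw [height_succ]
    linarith [edgeLength_le_one hs N]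

lemma vol_nonneg (s : ℕ → ℕ) (A : Set ℕ) : 0 ≤ vol s A :=
  tsum_nonneg fun k => Set.indicator_nonneg (fun k _ => m_nonneg s k) k

lemma vol_coe (s : ℕ → ℕ) (W : Finset ℕ) : vol s ↑W = ∑ k ∈ W, m s k := by
  rw [vol, ← tsum_subtype, Finset.tsum_subtype' W (m s)]

lemma summable_boundary (s : ℕ → ℕ) (ρ : ℕ → ℕ → ℝ) (W : Finset ℕ) :
    Summable (Set.indicator {q : ℕ × ℕ | (q.1 ∈ (W : Set ℕ) ∧ q.2 ∉ (W : Set ℕ)) ∨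
      (q.1 ∉ (W : Set ℕ) ∧ q.2 ∈ (W : Set ℕ))} fun q => wt s q.1 q.2 * ρ q.1 q.2) := by
  obtain ⟨K, hK⟩ := W.bddAbove
  refine summable_of_ne_finset_zero (s := Finset.range (K + 2) ×ˢ Finset.range (K + 2)) ?_
  rintro ⟨k, l⟩ hkl
  refine Set.indicator_apply_eq_zero.2 fun hW => ?_
  have hle : k ≤ K ∨ l ≤ K := hW.imp (fun h => hK h.1) fun h => hK h.2
  rw [Finset.mem_product, Finset.mem_range, Finset.mem_range] at hkl
  rw [wt_eq_zero (by omega), zero_mul]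

lemma boundarySum_range_succ (hs : ∀ k, 0 < s k) (N : ℕ) :
    boundarySum (wt s) (rho s) ↑(Finset.range (N + 1)) = 2 * cutWeight s N := by
  rw [boundarySum, tsum_eq_sum (s := {(N, N + 1), (N + 1, N)}), Finset.sum_pair (by simp),
    Set.indicator_of_mem (by simp), Set.indicator_of_mem (by simp), wt_mul_rho_self_succ hs,
    wt_mul_rho_succ_self hs, two_mul]
  rintro ⟨k, l⟩ hkl
  refine Set.indicator_apply_eq_zero.2 fun hN => ?_
  simp only [Finset.mem_insert, Finset.mem_singleton, Prod.mk.injEq] at hkl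
  simp only [Finset.coe_range, Set.mem_Iio, Set.mem_ofPred_eq] at hN
  rw [wt_eq_zero (by omega), zero_mul]

lemma two_mul_cutWeight_max'_le_boundarySum (hs : ∀ k, 0 < s k) {W : Finset ℕ} (hW : W.Nonempty) :
    2 * cutWeight s (W.max' hW) ≤ boundarySum (wt s) (rho s) ↑W := by
  set K := W.max' hW
  have hK : K ∈ W := W.max'_mem hW
  have hK' : K + 1 ∉ W := fun h => (W.le_max' _ h).not_gt K.lt_succ_self
  refine le_of_eq_of_le ?_ <| (summable_boundary s (rho s) W).sum_le_tsum
    {(K, K + 1), (K + 1, K)} fun q _ => Set.indicator_nonneg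
      (fun _ _ => mul_nonneg (wt_nonneg _ _ _) (rho_nonneg hs _ _)) q
  rw [Finset.sum_pair (by simp), Set.indicator_of_mem (by simp [hK, hK']),
    Set.indicator_of_mem (by simp [hK, hK']), wt_mul_rho_self_succ hs, wt_mul_rho_succ_self hs,
    two_mul]

lemma segmentRatio_max'_le (hs : ∀ k, 0 < s k) {n : ℝ} (hn : 2 ≤ n) {W : Finset ℕ}
    (hW : W.Nonempty) :
    segmentRatio s n (W.max' hW) ≤
      boundarySum (wt s) (rho s) ↑W / (∑ k ∈ W, m s k) ^ ((n - 2) / n) := by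
  have hpos : 0 < ∑ k ∈ W, m s k :=
    Finset.sum_pos (fun k _ => one_pos.trans_le (one_le_m (hs k))) hW
  have hsub : W ⊆ Finset.range (W.max' hW + 1) := fun k hk =>
    Finset.mem_range_succ_iff.2 (W.le_max' k hk)
  have hcut := two_mul_cutWeight_max'_le_boundarySum hs hW
  have hcut0 := cutWeight_nonneg s (W.max' hW)
  refine div_le_div₀ (by linarith) hcut (Real.rpow_pos_of_pos hpos _) (Real.rpow_le_rpow hpos.le
    (Finset.sum_le_sum_of_subset_of_nonneg hsub fun k _ _ => m_nonneg s k) ?_)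
  exact div_nonneg (by linarith) (by linarith)

lemma isoConst_range_succ (hs : ∀ k, 0 < s k) {n : ℝ} (hn : 2 ≤ n) (N : ℕ) :
    isoConst (wt s) (rho s) (m s) ↑(Finset.range (N + 1)) n =
      (Finset.range (N + 1)).inf' Finset.nonempty_range_add_one (segmentRatio s n) := by
  obtain ⟨K, hK, hmin⟩ :=
    Finset.exists_mem_eq_inf' Finset.nonempty_range_add_one (segmentRatio s n) (s := .range (N + 1))
  refine IsLeast.csInf_eq ⟨⟨Finset.range (K + 1), ?_, Finset.nonempty_range_add_one, ?_⟩, ?_⟩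
  · exact_mod_cast Finset.range_subset_range.2 (Finset.mem_range.1 hK)
  · rw [hmin, segmentRatio, boundarySum_range_succ hs]
  · rintro h ⟨W, hWN, hW, rfl⟩
    exact (Finset.inf'_le _ (hWN (W.max'_mem hW))).trans (segmentRatio_max'_le hs hn hW)

section Growth

variable {γ n : ℝ}

lemma pos_of_hasPowerGrowth_m (hs : HasPowerGrowth (m s) γ) (k : ℕ) : 0 < s k :=
  Nat.pos_of_ne_zero (Nat.cast_ne_zero.1 (hs.ne_zero k))

lemma exponent_nonneg_of_hasPowerGrowth_m (hs : HasPowerGrowth (m s) γ) : 0 ≤ γ :=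
  hs.exponent_nonneg fun k => one_le_m (pos_of_hasPowerGrowth_m hs k)

lemma hasPowerGrowth_Deg (hs : HasPowerGrowth (m s) γ) : HasPowerGrowth (Deg s) γ := by
  have hpos := pos_of_hasPowerGrowth_m hs
  have hpred : HasPowerGrowth (fun k => m s (k - 1)) γ :=
    hs.comp_of_le_of_le (fun k => by omega) fun k => by omega
  have hle : Deg s =O[⊤] fun k => m s (k - 1) + m s (k + 1) := .of_norm_le fun k =>
    (Real.norm_of_nonneg (zero_le_one.trans (one_le_Deg hpos k))).trans_le (Deg_le (hpos k))
  have hge : (fun k => m s (k + 1)) =O[⊤] Deg s := .of_norm_le fun k =>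
    (Real.norm_of_nonneg (m_nonneg s _)).trans_le (m_succ_le_Deg (hpos k))
  exact ⟨hle.trans (hpred.1.add hs.succ.1), hs.succ.2.trans hge⟩

lemma hasPowerGrowth_edgeLength (hs : HasPowerGrowth (m s) γ) :
    HasPowerGrowth (edgeLength s) (-(γ / 2)) := by
  have hinv := (hasPowerGrowth_Deg hs).one_div
  have hinv0 (k : ℕ) : 0 ≤ 1 / Deg s k :=
    one_div_nonneg.2 (zero_le_one.trans (one_le_Deg (pos_of_hasPowerGrowth_m hs) k))
  rw [← neg_div]
  exact (hinv.min hinv.succ).sqrt fun k => le_min (hinv0 k) (hinv0 (k + 1))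

lemma hasPowerGrowth_height_succ (hs : HasPowerGrowth (m s) γ) (hγ : γ < 2) :
    HasPowerGrowth (fun N => height s (N + 1)) (1 - γ / 2) := by
  rw [sub_eq_neg_add]
  exact (hasPowerGrowth_edgeLength hs).sum_range_succ (edgeLength_nonneg s) (by linarith)

lemma tendsto_height_atTop (hs : HasPowerGrowth (m s) γ) (hγ : γ < 2) :
    Tendsto (height s) atTop atTop :=
  (tendsto_add_atTop_iff_nat 1).1 <| (hasPowerGrowth_height_succ hs hγ).tendsto_atTop
    (fun N => height_nonneg s (N + 1)) (by linarith)

lemma hasPowerGrowth_sum_range_succ_m (hs : HasPowerGrowth (m s) γ) :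
    HasPowerGrowth (fun N => ∑ k ∈ Finset.range (N + 1), m s k) (γ + 1) :=
  hs.sum_range_succ (m_nonneg s) (by linarith [exponent_nonneg_of_hasPowerGrowth_m hs])

lemma hasPowerGrowth_segmentRatio (hs : HasPowerGrowth (m s) γ) (hn : n ≠ 0) :
    HasPowerGrowth (segmentRatio s n) ((γ + 1) * (2 / n) - (1 - γ / 2)) := by
  have hcut : HasPowerGrowth (cutWeight s) (γ + γ + -(γ / 2)) :=
    (hs.mul hs.succ).mul (hasPowerGrowth_edgeLength hs)
  have hvol := (hasPowerGrowth_sum_range_succ_m hs).rpow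
    (fun N => Finset.sum_nonneg fun k _ => m_nonneg s k) ((n - 2) / n)
  have hexp : (γ + 1) * (2 / n) - (1 - γ / 2) =
      γ + γ + -(γ / 2) - (γ + 1) * ((n - 2) / n) := by
    field_simp
    ring
  rw [hexp]
  exact (hcut.const_mul two_ne_zero).div hvol

lemma mul_two_div_le_of_two_mul_le (hγ1 : -1 < γ) (hγ2 : γ < 2)
    (hn : 2 * (2 * (γ + 1) / (2 - γ)) ≤ n) : (γ + 1) * (2 / n) ≤ 1 - γ / 2 := by
  have hd : 0 < 2 * (2 * (γ + 1) / (2 - γ)) :=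
    mul_pos two_pos (div_pos (by linarith) (sub_pos.2 hγ2))
  rw [← mul_div_assoc, div_le_iff₀ (hd.trans_le hn)]
  rw [← mul_div_assoc, div_le_iff₀ (sub_pos.2 hγ2)] at hn
  linarith

lemma two_le_of_two_mul_le (hγ0 : 0 ≤ γ) (hγ2 : γ < 2)
    (hn : 2 * (2 * (γ + 1) / (2 - γ)) ≤ n) : 2 ≤ n := by
  rw [← mul_div_assoc, div_le_iff₀ (sub_pos.2 hγ2)] at hn
  nlinarith

lemma exists_isoConst_range_succ_bounds (hs : HasPowerGrowth (m s) γ) (hγ : γ < 2)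
    (hn : 2 * (2 * (γ + 1) / (2 - γ)) ≤ n) :
    ∃ C : ℝ, 1 ≤ C ∧ ∀ N : ℕ,
      C⁻¹ * (vol s ↑(Finset.range (N + 1)) ^ (2 / n) / height s (N + 1)) ≤
          isoConst (wt s) (rho s) (m s) ↑(Finset.range (N + 1)) n ∧
        isoConst (wt s) (rho s) (m s) ↑(Finset.range (N + 1)) n ≤
          C * (vol s ↑(Finset.range (N + 1)) ^ (2 / n) / height s (N + 1)) := by
  have hγ0 := exponent_nonneg_of_hasPowerGrowth_m hs
  have hn2 := two_le_of_two_mul_le hγ0 hγ hn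
  have hvol0 (N : ℕ) : 0 ≤ ∑ k ∈ Finset.range (N + 1), m s k :=
    Finset.sum_nonneg fun k _ => m_nonneg s k
  have hiso := (hasPowerGrowth_segmentRatio hs (by positivity)).inf'_range_succ
    (segmentRatio_nonneg s n) (sub_nonpos.2 (mul_two_div_le_of_two_mul_le (by linarith) hγ hn))
  have hratio := ((hasPowerGrowth_sum_range_succ_m hs).rpow hvol0 (2 / n)).div
    (hasPowerGrowth_height_succ hs hγ)
  simp only [isoConst_range_succ (pos_of_hasPowerGrowth_m hs) hn2, vol_coe]
  exact exists_one_le_inv_mul_le_and_le_mul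
    (fun N => Finset.le_inf' _ _ fun k _ => segmentRatio_nonneg s n k)
    (fun N => div_nonneg (Real.rpow_nonneg (hvol0 N) _) (height_nonneg s _))
    (IsTheta.trans hiso (IsTheta.symm hratio))

end Growth

end OneDim

lemma gammaSphere_hasPowerGrowth {γ : ℝ} (hγ : 0 ≤ γ) :
    HasPowerGrowth (OneDim.m (gammaSphere γ)) γ := by
  refine isTheta_of_mul_le_of_le_mul (a := 1 / 2) (b := 1) (by norm_num)
    (.of_forall fun k => by positivity) (.of_forall fun k => ?_) (.of_forall fun k => ?_)
  · have hone : (1 : ℝ) ≤ ((k : ℝ) + 1) ^ γ := Real.one_le_rpow (by simp) hγ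
    have hfloor : (1 : ℝ) ≤ gammaSphere γ k := Nat.one_le_cast.2 ((Nat.one_le_floor_iff _).2 hone)
    have hlt : ((k : ℝ) + 1) ^ γ < gammaSphere γ k + 1 := Nat.lt_floor_add_one _
    rw [OneDim.m]
    linarith
  · rw [one_mul]
    exact Nat.floor_le (by positivity)

theorem gammaAntiTree_isoperimetry_general {s : ℕ → ℕ} {γ n : ℝ}
    (hs : HasPowerGrowth (OneDim.m s) γ) (hγ : γ < 2) (hn : 2 * (2 * (γ + 1) / (2 - γ)) ≤ n) :
    ∃ C : ℝ, 1 ≤ C ∧ ∀ (k : ℕ) (r : ℝ), max 1 (OneDim.rho s 0 k) ≤ r →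
      C⁻¹ * (OneDim.vol s (OneDim.ball s k r) ^ (2 / n) / r) ≤
          isoConst (OneDim.wt s) (OneDim.rho s) (OneDim.m s) (OneDim.ball s k r) n ∧
        isoConst (OneDim.wt s) (OneDim.rho s) (OneDim.m s) (OneDim.ball s k r) n ≤
          C * (OneDim.vol s (OneDim.ball s k r) ^ (2 / n) / r) := by
  obtain ⟨C, hC, h⟩ := OneDim.exists_isoConst_range_succ_bounds hs hγ hn
  refine ⟨3 * C, by linarith, fun k r hr => ?_⟩
  obtain ⟨N, hball, hrN, hNr⟩ := OneDim.exists_ball_eq_range (OneDim.pos_of_hasPowerGrowth_m hs)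
    (OneDim.tendsto_height_atTop hs hγ) ((le_max_left _ _).trans hr) ((le_max_right _ _).trans hr)
  have hr0 : 0 < r := one_pos.trans_le ((le_max_left _ _).trans hr)
  have hH0 := hr0.trans_le hrN
  have hvol0 := OneDim.vol_nonneg s (OneDim.ball s k r)
  obtain ⟨hlower, hupper⟩ := h N
  rw [← hball] at hlower hupper
  constructor
  · calc (3 * C)⁻¹ * (OneDim.vol s (OneDim.ball s k r) ^ (2 / n) / r)
        = C⁻¹ * (OneDim.vol s (OneDim.ball s k r) ^ (2 / n) / (3 * r)) := by field_simp
      _ ≤ C⁻¹ * (OneDim.vol s (OneDim.ball s k r) ^ (2 / n) / OneDim.height s (N + 1)) := by gcongr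
      _ ≤ _ := hlower
  · calc _ ≤ C * (OneDim.vol s (OneDim.ball s k r) ^ (2 / n) / OneDim.height s (N + 1)) := hupper
      _ ≤ 3 * C * (OneDim.vol s (OneDim.ball s k r) ^ (2 / n) / r) := by
        gcongr
        linarith

/-- **Isoperimetric inequality for anti-trees.**
For `γ ∈ [0,2)`, `d := 2(γ+1)/(2-γ)` and a real `n` with `n > 2` and `n ≥ 2d`, consider
the one-dimensional graph `b̃` over `(ℕ₀, m̃)` associated with the `γ`-anti-tree, with
intrinsic degree path metric `ρ̃` and closed balls `B̃_k(r)`.  There is `C ≥ 1` such that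
for every vertex `x` of the `γ`-anti-tree and every `r ≥ max(1, ρ̃(0,|x|))`:
`C⁻¹ m̃(B̃_{|x|}(r))^{2/n} / r ≤ h̃_{B̃_{|x|}(r),n} ≤ C m̃(B̃_{|x|}(r))^{2/n} / r`. -/
theorem gammaAntiTree_isoperimetry (γ : ℝ) (hγ0 : 0 ≤ γ) (hγ2 : γ < 2)
    (n : ℝ) (hn2 : 2 < n) (hnd : 2 * (2 * (γ + 1) / (2 - γ)) ≤ n) :
    ∃ C : ℝ, 1 ≤ C ∧ ∀ x : AntiTree (gammaSphere γ), ∀ r : ℝ,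
      max 1 (OneDim.rho (gammaSphere γ) 0 x.1) ≤ r →
      C⁻¹ * (OneDim.vol (gammaSphere γ) (OneDim.ball (gammaSphere γ) x.1 r) ^ (2 / n) / r) ≤
          isoConst (OneDim.wt (gammaSphere γ)) (OneDim.rho (gammaSphere γ))
            (OneDim.m (gammaSphere γ)) (OneDim.ball (gammaSphere γ) x.1 r) n ∧
      isoConst (OneDim.wt (gammaSphere γ)) (OneDim.rho (gammaSphere γ))
            (OneDim.m (gammaSphere γ)) (OneDim.ball (gammaSphere γ) x.1 r) n ≤
          C * (OneDim.vol (gammaSphere γ) (OneDim.ball (gammaSphere γ) x.1 r) ^ (2 / n) / r) := by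
  obtain ⟨C, hC, h⟩ := gammaAntiTree_isoperimetry_general (gammaSphere_hasPowerGrowth hγ0) hγ2 hnd
  exact ⟨C, hC, fun x => h x.1⟩
end

section
/- Let γ ∈ (0,2), p ∈ [1,∞), and let b be the γ-anti-tree over (X, m) with counting measure m ≡ 1 and intrinsic degree path metric ρ. Then there exists C ≥ 1 such that for all x ∈ X and all r ≥ max(1, ρ(x,o)): C⁻¹ · r^{2γ/(2−γ)} ≤ D_p(x,r) ≤ C · r^{2γ/(2−γ)}, where D_p(x,r) := ( (1/#B_x(r)) Σ_{y∈B_x(r)} Deg(y)^p )^{1/p}. -/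
open scoped BigOperators

/-!
An edge joining the spheres `k` and `k + 1` has length of order `k ^ (-γ / 2)`, because degrees on
these spheres are of order `k ^ γ`. By concavity this is the increment of `k ^ (1 - γ / 2)`, so the
intrinsic metric is controlled by the height `(|x| + 1) ^ (1 - γ / 2)`. On the scale
`r = t ^ (1 - γ / 2)`, a ball of radius `r ≥ max 1 (ρ(x, o))` reaches only levels of order at most
`t`, which bounds all degrees in it by a multiple of `t ^ γ = r ^ (2γ / (2 - γ))`.
Conversely, climbing from its centre, every ball of radius `r` contains of the order of `t`
complete spheres of level at least a multiple of `t`, hence at least a multiple of `t ^ (1 + γ)`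
vertices. The levels below `ε t` hold at most a multiple of `(ε t) ^ (1 + γ)` vertices, so for
small `ε` half of the ball lies above them and has degree at least a multiple of `t ^ γ`.
-/

section Real

theorem rpow_sub_rpow_le_mul_sub {x y β : ℝ} (hx : 0 < x) (hy : 0 ≤ y) (hβ0 : 0 ≤ β)
    (hβ1 : β ≤ 1) : y ^ β - x ^ β ≤ β * x ^ (β - 1) * (y - x) := by
  have bernoulli : (1 + (y / x - 1)) ^ β ≤ 1 + β * (y / x - 1) :=
    rpow_one_add_le_one_add_mul_self (by linarith [div_nonneg hy hx.le]) hβ0 hβ1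
  rw [add_sub_cancel, Real.div_rpow hy hx.le, div_le_iff₀ (by positivity)] at bernoulli
  calc y ^ β - x ^ β ≤ (1 + β * (y / x - 1)) * x ^ β - x ^ β := by gcongr
    _ = β * x ^ (β - 1) * (y - x) := by rw [Real.rpow_sub_one hx.ne']; field_simp; ring

theorem sqrt_one_div_mul_rpow {c t : ℝ} (hc : 0 ≤ c) (ht : 0 ≤ t) (γ : ℝ) :
    √(1 / (c * t ^ γ)) = (√c)⁻¹ * t ^ (-(γ / 2)) := by
  rw [one_div, Real.sqrt_inv, Real.sqrt_mul hc, Real.sqrt_eq_rpow (t ^ γ), ← Real.rpow_mul ht,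
    mul_one_div, mul_inv, Real.rpow_neg ht]

end Real

section PowerMean

variable {ι : Type*} {B : Set ι} {f : ι → ℝ} {p : ℝ}

/-- The power mean of exponent `p` of `f` over the finite set `B`, each point having weight one.
For a ball `B` and the degree function it is the mean degree `D_p(x, r)`. -/
noncomputable def powerMean (B : Set ι) (f : ι → ℝ) (p : ℝ) : ℝ :=
  ((1 / (B.ncard : ℝ)) * ∑' i, B.indicator (fun i => f i ^ p) i) ^ (1 / p)

theorem powerMean_coe_finset (F : Finset ι) (f : ι → ℝ) (p : ℝ) :
    powerMean (F : Set ι) f p = ((∑ i ∈ F, f i ^ p) / F.card) ^ p⁻¹ := by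
  have hsum : ∑' i, (F : Set ι).indicator (fun i => f i ^ p) i = ∑ i ∈ F, f i ^ p :=
    (tsum_subtype _ _).symm.trans (Finset.tsum_subtype F fun i => f i ^ p)
  rw [powerMean, hsum, Set.ncard_coe_finset, one_div_mul_eq_div, one_div]

theorem powerMean_le (hB : B.Finite) (hB0 : B.Nonempty) (hp : 0 < p) (hf : ∀ i ∈ B, 0 ≤ f i)
    {Q : ℝ} (hQ : ∀ i ∈ B, f i ≤ Q) : powerMean B f p ≤ Q := by
  lift B to Finset ι using hB
  have hcard : (0 : ℝ) < B.card := by exact_mod_cast (Finset.coe_nonempty.1 hB0).card_pos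
  have hQ0 : 0 ≤ Q := hB0.elim fun i hi => (hf i hi).trans (hQ i hi)
  have hsum : 0 ≤ ∑ i ∈ B, f i ^ p := Finset.sum_nonneg fun i hi => Real.rpow_nonneg (hf i hi) p
  rw [powerMean_coe_finset, Real.rpow_inv_le_iff_of_pos (by positivity) hQ0 hp,
    div_le_iff₀' hcard, ← nsmul_eq_mul]
  exact Finset.sum_le_card_nsmul _ _ _ fun i hi => Real.rpow_le_rpow (hf i hi) (hQ i hi) hp.le

theorem le_powerMean_of_subset (hB : B.Finite) (hB0 : B.Nonempty) (hp : 0 < p)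
    (hf : ∀ i ∈ B, 0 ≤ f i) {G : Set ι} (hG : G ⊆ B) {q θ : ℝ} (hq0 : 0 ≤ q)
    (hq : ∀ i ∈ G, q ≤ f i) (hθ0 : 0 ≤ θ) (hθ : θ * B.ncard ≤ G.ncard) :
    θ ^ p⁻¹ * q ≤ powerMean B f p := by
  lift G to Finset ι using hB.subset hG
  lift B to Finset ι using hB
  have hcard : (0 : ℝ) < B.card := by exact_mod_cast (Finset.coe_nonempty.1 hB0).card_pos
  rw [Set.ncard_coe_finset, Set.ncard_coe_finset] at hθ
  have hsum : θ * q ^ p * B.card ≤ ∑ i ∈ B, f i ^ p := by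
    calc θ * q ^ p * B.card = (θ * B.card) * q ^ p := by ring
      _ ≤ G.card * q ^ p := by gcongr
      _ ≤ ∑ i ∈ G, f i ^ p := by
        rw [← nsmul_eq_mul]
        exact Finset.card_nsmul_le_sum _ _ _ fun i hi => Real.rpow_le_rpow hq0 (hq i hi) hp.le
      _ ≤ ∑ i ∈ B, f i ^ p :=
        Finset.sum_le_sum_of_subset_of_nonneg (Finset.coe_subset.1 hG) fun i hi _ =>
          Real.rpow_nonneg (hf i hi) p
  calc θ ^ p⁻¹ * q = (θ * q ^ p) ^ p⁻¹ := by
        rw [Real.mul_rpow hθ0 (by positivity), Real.rpow_rpow_inv hq0 hp.ne']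
    _ ≤ ((∑ i ∈ B, f i ^ p) / B.card) ^ p⁻¹ := by
        gcongr
        rwa [le_div_iff₀ hcard]
    _ = powerMean B f p := (powerMean_coe_finset B f p).symm

end PowerMean

section PathMetric

variable {X : Type*} {b : X → X → ℝ} {D : X → ℝ} {x y z : X} {L : ℝ}

/-- The length of an edge from `x` to `y` in the intrinsic degree path metric of a graph with
weighted degree function `D`. -/
noncomputable def edgeLength (D : X → ℝ) (x y : X) : ℝ :=
  √(min (1 / D x) (1 / D y))

theorem edgeLength_comm (D : X → ℝ) (x y : X) : edgeLength D x y = edgeLength D y x := by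
  rw [edgeLength, edgeLength, min_comm]

variable (b D) in
/-- `L` is the length of a finite path from `x` to `y` in the weighted graph `b`, so that
`pathMetric b D x y` is the infimum of all such `L`. -/
def IsPathLength (x y : X) (L : ℝ) : Prop :=
  ∃ (k : ℕ) (p : ℕ → X), p 0 = x ∧ p k = y ∧ (∀ j < k, 0 < b (p j) (p (j + 1))) ∧
    L = ∑ j ∈ Finset.range k, edgeLength D (p j) (p (j + 1))

theorem IsPathLength.refl (x : X) : IsPathLength b D x x 0 :=
  ⟨0, fun _ => x, rfl, rfl, by simp, by simp⟩

theorem IsPathLength.cons (hxz : 0 < b x z) (h : IsPathLength b D z y L) :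
    IsPathLength b D x y (L + edgeLength D x z) := by
  obtain ⟨k, p, h0, hk, hb, rfl⟩ := h
  refine ⟨k + 1, fun n => Nat.casesOn n x p, rfl, hk, ?_, ?_⟩
  · rintro (_ | j) hj
    · simpa [h0] using hxz
    · exact hb j (by lia)
  · rw [Finset.sum_range_succ']
    simp [h0]

theorem exists_isPathLength_of_reflTransGen
    (h : Relation.ReflTransGen (fun u v => 0 < b u v) x y) : ∃ L, IsPathLength b D x y L := by
  induction h using Relation.ReflTransGen.head_induction_on with
  | refl => exact ⟨0, .refl y⟩
  | head hxz _ ih =>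
    obtain ⟨L, hL⟩ := ih
    exact ⟨_, hL.cons hxz⟩

theorem pathMetric_le (h : IsPathLength b D x y L) : pathMetric b D x y ≤ L := by
  refine csInf_le ⟨0, ?_⟩ h
  rintro _ ⟨k, p, -, -, -, rfl⟩
  exact Finset.sum_nonneg fun _ _ => Real.sqrt_nonneg _

theorem pathMetric_le_sub_of_reflTransGen {r : X → X → Prop} {f : X → ℝ}
    (hb : ∀ u v, r u v → 0 < b u v) (hf : ∀ u v, r u v → edgeLength D u v ≤ f v - f u)
    (h : Relation.ReflTransGen r x y) : pathMetric b D x y ≤ f y - f x := by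
  suffices ∃ L, IsPathLength b D x y L ∧ L ≤ f y - f x by
    obtain ⟨L, hL, hle⟩ := this
    exact (pathMetric_le hL).trans hle
  induction h using Relation.ReflTransGen.head_induction_on with
  | refl => exact ⟨0, .refl y, by simp⟩
  | head hxz _ ih =>
    obtain ⟨L, hL, hle⟩ := ih
    exact ⟨_, hL.cons (hb _ _ hxz), by linarith [hf _ _ hxz]⟩

theorem abs_sub_le_mul_pathMetric {f : X → ℝ} {c : ℝ} (hc : 0 < c)
    (hf : ∀ u v, 0 < b u v → |f v - f u| ≤ c * edgeLength D u v)
    (hxy : ∃ L, IsPathLength b D x y L) : |f y - f x| ≤ c * pathMetric b D x y := by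
  rw [← div_le_iff₀' hc]
  refine le_csInf hxy ?_
  rintro _ ⟨k, p, rfl, rfl, hb, rfl⟩
  rw [div_le_iff₀' hc, Finset.mul_sum, ← Finset.sum_range_sub fun j => f (p j)]
  exact (Finset.abs_sum_le_sum_abs _ _).trans
    (Finset.sum_le_sum fun j hj => hf _ _ (hb j (Finset.mem_range.1 hj)))

end PathMetric

namespace AntiTree

variable {s : ℕ → ℕ} {x y : AntiTree s}

/-- The union of the spheres with index in `t`. -/
def spheres (s : ℕ → ℕ) (t : Finset ℕ) : Finset (AntiTree s) :=
  t.sigma fun _ => Finset.univ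

theorem mem_spheres {t : Finset ℕ} : x ∈ spheres s t ↔ x.1 ∈ t :=
  Finset.mem_sigma.trans (and_iff_left (Finset.mem_univ _))

theorem card_spheres (s : ℕ → ℕ) (t : Finset ℕ) : (spheres s t).card = ∑ k ∈ t, s k :=
  (Finset.card_sigma _ _).trans (by simp only [Finset.card_univ, Fintype.card_fin])

theorem wt_pos_iff : 0 < wt s x y ↔ x.1 + 1 = y.1 ∨ y.1 + 1 = x.1 := by
  unfold wt
  split_ifs with h <;> simp [h]

theorem deg_eq_sum {t : Finset ℕ} (ht : ∀ k, k ∈ t ↔ x.1 + 1 = k ∨ k + 1 = x.1) :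
    Deg s x = ∑ k ∈ t, (s k : ℝ) := by
  have hwt : ∀ y, wt s x y = if y.1 ∈ t then 1 else 0 := fun y => by simp only [wt, ht]
  have hsupp : ∀ y ∉ spheres s t, wt s x y = 0 := fun y hy => by
    rw [hwt, if_neg (mt mem_spheres.2 hy)]
  rw [Deg, tsum_eq_sum hsupp, ← Nat.cast_sum, ← card_spheres, Finset.card_eq_sum_ones,
    Nat.cast_sum]
  exact Finset.sum_congr rfl fun y hy => by rw [hwt, if_pos (mem_spheres.1 hy), Nat.cast_one]

theorem le_deg (x : AntiTree s) : (s (x.1 + 1) : ℝ) ≤ Deg s x := by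
  rw [deg_eq_sum (t := {k ∈ Finset.range (x.1 + 2) | x.1 + 1 = k ∨ k + 1 = x.1}) (by simp; lia)]
  exact Finset.single_le_sum (f := fun k => (s k : ℝ)) (fun _ _ => by positivity) (by simp)

-- At the root the truncated difference `x.1 - 1` is `0`, which only adds a spare term.
theorem deg_le (x : AntiTree s) : Deg s x ≤ s (x.1 + 1) + s (x.1 - 1) := by
  rw [deg_eq_sum (t := {k ∈ Finset.range (x.1 + 2) | x.1 + 1 = k ∨ k + 1 = x.1}) (by simp; lia),
    ← Finset.sum_pair (f := fun k => (s k : ℝ)) (by lia : x.1 + 1 ≠ x.1 - 1)]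
  exact Finset.sum_le_sum_of_subset_of_nonneg (fun k => by simp; lia) fun _ _ _ => by positivity

theorem reflTransGen_of_lt (hs : ∀ k, 0 < s k) (hxy : x.1 < y.1) :
    Relation.ReflTransGen (fun u v : AntiTree s => u.1 + 1 = v.1) x y := by
  obtain ⟨d, hd⟩ := Nat.exists_eq_add_of_lt hxy
  induction d generalizing x with
  | zero => exact .single hd.symm
  | succ d ih =>
    let z : AntiTree s := ⟨x.1 + 1, ⟨0, hs _⟩⟩
    have hz : y.1 = z.1 + d + 1 := by change y.1 = x.1 + 1 + d + 1; lia
    exact .head (b := z) rfl (ih (by lia) hz)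

theorem exists_isPathLength (hs : ∀ k, 0 < s k) (D : AntiTree s → ℝ) (x y : AntiTree s) :
    ∃ L, IsPathLength (wt s) D x y L := by
  let z : AntiTree s := ⟨x.1 + y.1 + 1, ⟨0, hs _⟩⟩
  have ascend : ∀ u : AntiTree s, u.1 < z.1 → Relation.ReflTransGen (fun u v => 0 < wt s u v) u z :=
    fun u hu => Relation.ReflTransGen.mono (fun _ _ h => wt_pos_iff.2 (Or.inl h)) _ _
      (reflTransGen_of_lt hs hu)
  have : Std.Symm fun u v : AntiTree s => 0 < wt s u v :=
    ⟨fun _ _ h => wt_pos_iff.2 (wt_pos_iff.1 h).symm⟩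
  have hxz : x.1 < z.1 := by change x.1 < x.1 + y.1 + 1; lia
  have hyz : y.1 < z.1 := by change y.1 < x.1 + y.1 + 1; lia
  exact exists_isPathLength_of_reflTransGen
    ((ascend x hxz).trans (symm_of (Relation.ReflTransGen _) (ascend y hyz)))

theorem self_mem_ball (x : AntiTree s) {r : ℝ} (hr : 0 ≤ r) : x ∈ ball s x r :=
  (pathMetric_le (.refl x)).trans hr

/-- The height `(|x| + 1) ^ (1 - γ / 2)`, a Lipschitz function for the intrinsic metric whose
increments along ascending paths are comparable to the length of the path. -/
noncomputable def height (γ : ℝ) (x : AntiTree s) : ℝ :=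
  ((x.1 : ℝ) + 1) ^ (1 - γ / 2)

theorem height_nonneg (γ : ℝ) (x : AntiTree s) : 0 ≤ height γ x :=
  Real.rpow_nonneg (by positivity) _

theorem add_one_le_of_height_le {γ M : ℝ} (hγ : γ < 2) (hx : height γ x ≤ M) :
    (x.1 : ℝ) + 1 ≤ M ^ (1 - γ / 2)⁻¹ :=
  (Real.le_rpow_inv_iff_of_pos (by positivity) ((height_nonneg γ x).trans hx) (by linarith)).2 hx

end AntiTree

/-- The sphere function `s` is comparable to `(k + 1) ^ γ`, up to the factor `A` on either side.
This is all that the mean degree estimate needs to know about the `γ`-anti-tree. -/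
structure PowerGrowth (s : ℕ → ℕ) (γ A : ℝ) : Prop where
  rpow_le (k : ℕ) : ((k : ℝ) + 1) ^ γ ≤ A * s k
  le_rpow (k : ℕ) : (s k : ℝ) ≤ A * ((k : ℝ) + 1) ^ γ

theorem powerGrowth_gammaSphere {γ : ℝ} (hγ : 0 ≤ γ) : PowerGrowth (gammaSphere γ) γ 2 where
  rpow_le k := by
    have := Nat.div_two_lt_floor (Real.one_le_rpow (by simp : (1 : ℝ) ≤ k + 1) hγ)
    unfold gammaSphere
    linarith
  le_rpow k :=
    (Nat.floor_le (by positivity)).trans (le_mul_of_one_le_left (by positivity) one_le_two)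

namespace PowerGrowth

open AntiTree

variable {s : ℕ → ℕ} {γ A : ℝ}

theorem const_pos (h : PowerGrowth s γ A) : 0 < A := by
  have h0 := h.rpow_le 0
  rw [Nat.cast_zero, zero_add, Real.one_rpow] at h0
  exact pos_of_mul_pos_left (one_pos.trans_le h0) (Nat.cast_nonneg _)

theorem one_le_const (h : PowerGrowth s γ A) : 1 ≤ A := by
  have hlower := h.rpow_le 0
  have hupper := h.le_rpow 0
  rw [Nat.cast_zero, zero_add, Real.one_rpow] at hlower hupper
  nlinarith [h.const_pos]

theorem sphere_pos (h : PowerGrowth s γ A) (k : ℕ) : 0 < s k := by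
  have hk : 0 < A * (s k : ℝ) := lt_of_lt_of_le (by positivity) (h.rpow_le k)
  exact_mod_cast pos_of_mul_pos_right hk h.const_pos.le

theorem exponent_nonneg (h : PowerGrowth s γ A) : 0 ≤ γ := by
  by_contra! hγ
  have hdecay : Filter.Tendsto (fun k : ℕ => ((k : ℝ) + 1) ^ γ) Filter.atTop (nhds 0) := by
    simpa only [neg_neg, Function.comp_def, Nat.cast_add_one] using
      (tendsto_rpow_neg_atTop (neg_pos.2 hγ)).comp
        (tendsto_natCast_atTop_atTop.comp (Filter.tendsto_add_atTop_nat 1))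
  have hone : (1 : ℝ) ≤ A * 0 := ge_of_tendsto' (hdecay.const_mul A) fun k =>
    (Nat.one_le_cast.2 (h.sphere_pos k)).trans (h.le_rpow k)
  linarith

theorem le_deg (h : PowerGrowth s γ A) (x : AntiTree s) :
    A⁻¹ * ((x.1 : ℝ) + 2) ^ γ ≤ Deg s x := by
  have hs := h.rpow_le (x.1 + 1)
  rw [Nat.cast_add_one, add_assoc, one_add_one_eq_two] at hs
  exact ((inv_mul_le_iff₀ h.const_pos).2 hs).trans (AntiTree.le_deg x)

theorem deg_pos (h : PowerGrowth s γ A) (x : AntiTree s) : 0 < Deg s x :=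
  (Nat.cast_pos.2 (h.sphere_pos _)).trans_le (AntiTree.le_deg x)

theorem deg_le (h : PowerGrowth s γ A) (x : AntiTree s) :
    Deg s x ≤ 2 * A * ((x.1 : ℝ) + 2) ^ γ := by
  have hA := h.const_pos
  have hγ := h.exponent_nonneg
  have hs : ∀ k ≤ x.1 + 1, (s k : ℝ) ≤ A * ((x.1 : ℝ) + 2) ^ γ := fun k hk => by
    have hk' : (k : ℝ) + 1 ≤ x.1 + 2 := by exact_mod_cast Nat.succ_le_succ hk
    exact (h.le_rpow k).trans (by gcongr)
  linarith [AntiTree.deg_le x, hs (x.1 + 1) le_rfl, hs (x.1 - 1) (by lia)]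

theorem edgeLength_le (h : PowerGrowth s γ A) {u v : AntiTree s} (huv : u.1 + 1 = v.1) :
    edgeLength (Deg s) u v ≤ √A * ((v.1 : ℝ) + 1) ^ (-(γ / 2)) := by
  have hA := h.const_pos
  have hdeg := h.le_deg u
  rw [← one_add_one_eq_two, ← add_assoc, ← Nat.cast_add_one, huv] at hdeg
  calc edgeLength (Deg s) u v ≤ √(1 / (A⁻¹ * ((v.1 : ℝ) + 1) ^ γ)) :=
        Real.sqrt_le_sqrt ((min_le_left _ _).trans (one_div_le_one_div_of_le (by positivity) hdeg))
    _ = √A * ((v.1 : ℝ) + 1) ^ (-(γ / 2)) := by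
        rw [sqrt_one_div_mul_rpow (by positivity) (by positivity), Real.sqrt_inv, inv_inv]

theorem le_edgeLength (h : PowerGrowth s γ A) {u v : AntiTree s} (huv : u.1 + 1 = v.1) :
    (√(2 * A * 3 ^ γ))⁻¹ * ((u.1 : ℝ) + 1) ^ (-(γ / 2)) ≤ edgeLength (Deg s) u v := by
  have hA := h.const_pos
  have hγ := h.exponent_nonneg
  have hdeg : ∀ w : AntiTree s, w.1 ≤ u.1 + 1 → Deg s w ≤ 2 * A * 3 ^ γ * ((u.1 : ℝ) + 1) ^ γ :=
    fun w hw => by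
      have hw' : (w.1 : ℝ) + 2 ≤ 3 * (u.1 + 1) := by exact_mod_cast (by lia)
      calc Deg s w ≤ 2 * A * ((w.1 : ℝ) + 2) ^ γ := h.deg_le w
        _ ≤ 2 * A * (3 * (u.1 + 1)) ^ γ := by gcongr
        _ = 2 * A * 3 ^ γ * ((u.1 : ℝ) + 1) ^ γ := by
          rw [Real.mul_rpow (by norm_num) (by positivity), mul_assoc _ (3 ^ γ)]
  rw [← sqrt_one_div_mul_rpow (by positivity) (by positivity)]
  exact Real.sqrt_le_sqrt (le_min
    (one_div_le_one_div_of_le (h.deg_pos u) (hdeg u (by lia)))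
    (one_div_le_one_div_of_le (h.deg_pos v) (hdeg v huv.ge)))

theorem edgeLength_le_height_sub (h : PowerGrowth s γ A) (hγ : γ < 2) {u v : AntiTree s}
    (huv : u.1 + 1 = v.1) :
    edgeLength (Deg s) u v ≤ √A / (1 - γ / 2) * (height γ v - height γ u) := by
  have hγ0 := h.exponent_nonneg
  have hβ : 0 < 1 - γ / 2 := by linarith
  have hv : (v.1 : ℝ) = u.1 + 1 := by exact_mod_cast huv.symm
  have tangent := rpow_sub_rpow_le_mul_sub (x := (v.1 : ℝ) + 1) (y := (u.1 : ℝ) + 1)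
    (by positivity) (by positivity) hβ.le (by linarith)
  have hconcave : (1 - γ / 2) * ((v.1 : ℝ) + 1) ^ (-(γ / 2)) ≤ height γ v - height γ u := by
    rw [show 1 - γ / 2 - 1 = -(γ / 2) by ring,
      show (u.1 : ℝ) + 1 - (v.1 + 1) = -1 by rw [hv]; ring] at tangent
    unfold height
    linarith
  calc edgeLength (Deg s) u v ≤ √A * ((v.1 : ℝ) + 1) ^ (-(γ / 2)) := h.edgeLength_le huv
    _ = √A / (1 - γ / 2) * ((1 - γ / 2) * ((v.1 : ℝ) + 1) ^ (-(γ / 2))) := by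
        rw [← mul_assoc, div_mul_cancel₀ _ hβ.ne']
    _ ≤ √A / (1 - γ / 2) * (height γ v - height γ u) := by gcongr

theorem height_sub_le_edgeLength (h : PowerGrowth s γ A) (hγ : γ ≤ 2) {u v : AntiTree s}
    (huv : u.1 + 1 = v.1) :
    height γ v - height γ u ≤ √(2 * A * 3 ^ γ) * edgeLength (Deg s) u v := by
  have hA := h.const_pos
  have hγ0 := h.exponent_nonneg
  have hv : (v.1 : ℝ) = u.1 + 1 := by exact_mod_cast huv.symm
  have tangent := rpow_sub_rpow_le_mul_sub (x := (u.1 : ℝ) + 1) (y := (v.1 : ℝ) + 1)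
    (β := 1 - γ / 2) (by positivity) (by positivity) (by linarith) (by linarith)
  rw [show 1 - γ / 2 - 1 = -(γ / 2) by ring,
    show (v.1 : ℝ) + 1 - (u.1 + 1) = 1 by rw [hv]; ring, mul_one] at tangent
  calc height γ v - height γ u ≤ (1 - γ / 2) * ((u.1 : ℝ) + 1) ^ (-(γ / 2)) := tangent
    _ ≤ ((u.1 : ℝ) + 1) ^ (-(γ / 2)) := mul_le_of_le_one_left (by positivity) (by linarith)
    _ ≤ √(2 * A * 3 ^ γ) * edgeLength (Deg s) u v :=
      (inv_mul_le_iff₀ (by positivity)).1 (h.le_edgeLength huv)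

theorem rho_le_height_sub (h : PowerGrowth s γ A) (hγ : γ < 2) {x y : AntiTree s}
    (hxy : x.1 < y.1) : rho s x y ≤ √A / (1 - γ / 2) * (height γ y - height γ x) := by
  rw [mul_sub]
  refine pathMetric_le_sub_of_reflTransGen (f := fun z => √A / (1 - γ / 2) * height γ z)
    (fun _ _ huv => wt_pos_iff.2 (Or.inl huv)) (fun _ _ huv => ?_)
    (reflTransGen_of_lt h.sphere_pos hxy)
  rw [← mul_sub]
  exact h.edgeLength_le_height_sub hγ huv

theorem abs_height_sub_le_rho (h : PowerGrowth s γ A) (hγ : γ ≤ 2) (x y : AntiTree s) :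
    |height γ y - height γ x| ≤ √(2 * A * 3 ^ γ) * rho s x y := by
  have hA := h.const_pos
  have ascending : ∀ u v : AntiTree s, u.1 + 1 = v.1 →
      |height γ v - height γ u| ≤ √(2 * A * 3 ^ γ) * edgeLength (Deg s) u v := fun u v huv => by
    have hmono : height γ u ≤ height γ v := by
      refine Real.rpow_le_rpow (by positivity) ?_ (by linarith)
      exact_mod_cast (by lia : u.1 + 1 ≤ v.1 + 1)
    rw [abs_of_nonneg (sub_nonneg.2 hmono)]
    exact h.height_sub_le_edgeLength hγ huv
  refine abs_sub_le_mul_pathMetric (by positivity) (fun u v huv => ?_)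
    (exists_isPathLength h.sphere_pos _ x y)
  rcases wt_pos_iff.1 huv with huv | hvu
  · exact ascending u v huv
  · rw [abs_sub_comm, edgeLength_comm]
    exact ascending v u hvu

theorem finite_ball (h : PowerGrowth s γ A) (hγ : γ < 2) (x : AntiTree s) (r : ℝ) :
    (ball s x r).Finite := by
  set M := (height γ x + √(2 * A * 3 ^ γ) * r) ^ (1 - γ / 2)⁻¹
  refine (spheres s (Finset.range ⌊M⌋₊)).finite_toSet.subset fun y hy => ?_
  have hheight : height γ y ≤ height γ x + √(2 * A * 3 ^ γ) * r := by
    have hrho : √(2 * A * 3 ^ γ) * rho s x y ≤ √(2 * A * 3 ^ γ) * r := by gcongr; exact hy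
    linarith [le_of_abs_le (h.abs_height_sub_le_rho hγ.le x y)]
  rw [Finset.mem_coe, mem_spheres, Finset.mem_range]
  exact Nat.le_floor (by exact_mod_cast add_one_le_of_height_le hγ hheight)

theorem card_spheres_range_le (h : PowerGrowth s γ A) (n : ℕ) :
    ((spheres s (Finset.range n)).card : ℝ) ≤ A * (n : ℝ) ^ (1 + γ) := by
  have hA := h.const_pos
  have hγ := h.exponent_nonneg
  rw [card_spheres, Nat.cast_sum]
  calc ∑ k ∈ Finset.range n, (s k : ℝ) ≤ (Finset.range n).card • (A * (n : ℝ) ^ γ) := by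
        refine Finset.sum_le_card_nsmul _ _ _ fun k hk => (h.le_rpow k).trans ?_
        have hk' : (k : ℝ) + 1 ≤ n := by exact_mod_cast Finset.mem_range.1 hk
        gcongr
    _ = A * (n : ℝ) ^ (1 + γ) := by
        rw [Finset.card_range, nsmul_eq_mul, Real.rpow_one_add' (by positivity) (by positivity)]
        ring

theorem spheres_subset_ball (h : PowerGrowth s γ A) (hγ : γ < 2) (x : AntiTree s) {n : ℕ}
    {r : ℝ} (hr : √A / (1 - γ / 2) * (2 * n) ^ (1 - γ / 2) ≤ r) :
    (spheres s (Finset.Ico (x.1 + n + 1) (x.1 + 2 * n + 1)) : Set (AntiTree s)) ⊆ ball s x r := by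
  have hγ0 := h.exponent_nonneg
  have hβ : 0 < 1 - γ / 2 := by linarith
  intro y hy
  rw [Finset.mem_coe, mem_spheres, Finset.mem_Ico] at hy
  have hheight : height γ y ≤ height γ x + (2 * n) ^ (1 - γ / 2) := by
    have hlevel : (y.1 : ℝ) + 1 ≤ x.1 + 1 + 2 * n := by exact_mod_cast (by lia)
    exact (Real.rpow_le_rpow (by positivity) hlevel hβ.le).trans
      (Real.rpow_add_le_add_rpow (by positivity) (by positivity) hβ.le (by linarith))
  calc rho s x y ≤ √A / (1 - γ / 2) * (height γ y - height γ x) :=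
        h.rho_le_height_sub hγ (by lia)
    _ ≤ √A / (1 - γ / 2) * (2 * n) ^ (1 - γ / 2) := by gcongr; linarith
    _ ≤ r := hr

theorem rpow_le_ncard_ball (h : PowerGrowth s γ A) (hγ : γ < 2) (x : AntiTree s) {n : ℕ}
    {r : ℝ} (hr : √A / (1 - γ / 2) * (2 * n) ^ (1 - γ / 2) ≤ r) :
    A⁻¹ * (n : ℝ) ^ (1 + γ) ≤ (ball s x r).ncard := by
  have hA := h.const_pos
  have hγ0 := h.exponent_nonneg
  set I := Finset.Ico (x.1 + n + 1) (x.1 + 2 * n + 1) with hI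
  have hcard : I.card = n := by rw [hI, Nat.card_Ico]; lia
  calc A⁻¹ * (n : ℝ) ^ (1 + γ) = I.card • (A⁻¹ * (n : ℝ) ^ γ) := by
        rw [hcard, nsmul_eq_mul, Real.rpow_one_add' (by positivity) (by positivity)]
        ring
    _ ≤ ∑ k ∈ I, (s k : ℝ) := by
        refine Finset.card_nsmul_le_sum _ _ _ fun k hk => ?_
        have hnk : n ≤ k + 1 := by have := (Finset.mem_Ico.1 hk).1; lia
        have hnk' : (n : ℝ) ≤ k + 1 := by exact_mod_cast hnk
        exact ((inv_mul_le_iff₀ hA).2 (le_trans (by gcongr) (h.rpow_le k)))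
    _ = (spheres s I : Set (AntiTree s)).ncard := by
        rw [Set.ncard_coe_finset, card_spheres, Nat.cast_sum]
    _ ≤ (ball s x r).ncard := by
        exact_mod_cast Set.ncard_le_ncard (h.spheres_subset_ball hγ x hr) (h.finite_ball hγ x r)

theorem exists_mul_rpow_le_ncard_ball (h : PowerGrowth s γ A) (hγ : γ < 2) :
    ∃ c > 0, ∀ (x : AntiTree s) (t : ℝ), 0 ≤ t →
      c * t ^ (1 + γ) ≤ (ball s x (t ^ (1 - γ / 2))).ncard := by
  have hA := h.const_pos
  have hγ0 := h.exponent_nonneg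
  have hβ : 0 < 1 - γ / 2 := by linarith
  set κ := ((1 - γ / 2) / √A) ^ (1 - γ / 2)⁻¹ with hκ
  have hκ0 : 0 < κ := by positivity
  refine ⟨A⁻¹ * (κ / 4) ^ (1 + γ), by positivity, fun x t ht => ?_⟩
  rw [mul_assoc, ← Real.mul_rpow (by positivity) ht]
  set n := ⌊κ * t / 2⌋₊
  have hlt : κ * t / 2 < n + 1 := Nat.lt_floor_add_one _
  rcases n.eq_zero_or_pos with hn0 | hn1
  · have hball : (1 : ℝ) ≤ (ball s x (t ^ (1 - γ / 2))).ncard := by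
      exact_mod_cast (Set.ncard_pos (h.finite_ball hγ x _)).2
        ⟨x, self_mem_ball x (by positivity)⟩
    rw [hn0, Nat.cast_zero] at hlt
    exact (mul_le_one₀ (inv_le_one_of_one_le₀ h.one_le_const) (by positivity)
      (Real.rpow_le_one (by positivity) (by linarith) (by positivity))).trans hball
  · have hn1' : (1 : ℝ) ≤ n := by exact_mod_cast hn1
    have hκn : κ / 4 * t ≤ n := by linarith
    have hradius : √A / (1 - γ / 2) * (2 * n) ^ (1 - γ / 2) ≤ t ^ (1 - γ / 2) := by
      have hnκ : 2 * (n : ℝ) ≤ κ * t := by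
        linarith [Nat.floor_le (by positivity : 0 ≤ κ * t / 2)]
      calc √A / (1 - γ / 2) * (2 * n) ^ (1 - γ / 2)
          ≤ √A / (1 - γ / 2) * (κ * t) ^ (1 - γ / 2) := by gcongr
        _ = t ^ (1 - γ / 2) := by
          rw [Real.mul_rpow hκ0.le ht, hκ, Real.rpow_inv_rpow (by positivity) hβ.ne', ← mul_assoc,
            div_mul_div_cancel₀ hβ.ne', div_self (by positivity), one_mul]
    exact le_trans (by gcongr) (h.rpow_le_ncard_ball hγ x hradius)

theorem exists_half_ncard_ball_le (h : PowerGrowth s γ A) (hγ : γ < 2) :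
    ∃ ε > 0, ∀ (x : AntiTree s) (t : ℝ), 0 ≤ t →
      1 / 2 * ((ball s x (t ^ (1 - γ / 2))).ncard : ℝ) ≤
        {y ∈ ball s x (t ^ (1 - γ / 2)) | ε * t ≤ y.1 + 1}.ncard := by
  have hA := h.const_pos
  have hγ0 := h.exponent_nonneg
  obtain ⟨v, hv, hvolume⟩ := h.exists_mul_rpow_le_ncard_ball hγ
  set ε := (v / (2 * A)) ^ (1 + γ)⁻¹ with hε
  have hε0 : 0 < ε := by positivity
  refine ⟨ε, hε0, fun x t ht => ?_⟩
  set B := ball s x (t ^ (1 - γ / 2))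
  set low := spheres s (Finset.range ⌊ε * t⌋₊) with hlow
  have hlow_card : (low.card : ℝ) ≤ B.ncard / 2 := by
    calc (low.card : ℝ) ≤ A * (⌊ε * t⌋₊ : ℝ) ^ (1 + γ) := h.card_spheres_range_le _
      _ ≤ A * (ε * t) ^ (1 + γ) := by gcongr; exact Nat.floor_le (by positivity)
      _ = v * t ^ (1 + γ) / 2 := by
        rw [Real.mul_rpow hε0.le ht, hε, Real.rpow_inv_rpow (by positivity) (by positivity)]
        field_simp
      _ ≤ B.ncard / 2 := by linarith [hvolume x t ht]
  have hsplit : (B.ncard : ℝ) ≤ (B \ low).ncard + low.card := by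
    rw [← Set.ncard_coe_finset low]
    exact_mod_cast Set.ncard_le_ncard_sdiff_add_ncard B low low.finite_toSet
  have hhigh : B \ low ⊆ {y ∈ B | ε * t ≤ y.1 + 1} := fun y hy => by
    have hlevel : ⌊ε * t⌋₊ ≤ y.1 := by
      simpa only [hlow, Finset.mem_coe, mem_spheres, Finset.mem_range, not_lt] using hy.2
    exact ⟨hy.1, by linarith [Nat.lt_floor_add_one (ε * t), (Nat.cast_le (α := ℝ)).2 hlevel]⟩
  have hhigh_card : ((B \ low).ncard : ℝ) ≤ {y ∈ B | ε * t ≤ y.1 + 1}.ncard := by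
    exact_mod_cast Set.ncard_le_ncard hhigh ((h.finite_ball hγ x _).subset (Set.sep_subset _ _))
  linarith

theorem exists_mul_rpow_le_powerMean (h : PowerGrowth s γ A) (hγ : γ < 2) {p : ℝ} (hp : 0 < p) :
    ∃ c > 0, ∀ (x : AntiTree s) (t : ℝ), 0 ≤ t →
      c * t ^ γ ≤ powerMean (ball s x (t ^ (1 - γ / 2))) (Deg s) p := by
  have hA := h.const_pos
  have hγ0 := h.exponent_nonneg
  obtain ⟨ε, hε, hhalf⟩ := h.exists_half_ncard_ball_le hγ
  refine ⟨(1 / 2) ^ p⁻¹ * (A⁻¹ * ε ^ γ), by positivity, fun x t ht => ?_⟩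
  have hdeg : ∀ y ∈ {y ∈ ball s x (t ^ (1 - γ / 2)) | ε * t ≤ y.1 + 1},
      A⁻¹ * (ε * t) ^ γ ≤ Deg s y := fun y hy =>
    le_trans (by gcongr; linarith [hy.2]) (h.le_deg y)
  rw [mul_assoc, mul_assoc, ← Real.mul_rpow hε.le ht]
  exact le_powerMean_of_subset (h.finite_ball hγ x _) ⟨x, self_mem_ball x (by positivity)⟩ hp
    (fun y _ => (h.deg_pos y).le) (Set.sep_subset _ _) (by positivity) hdeg (by norm_num)
    (hhalf x t ht)

theorem exists_deg_le_mul_rpow (h : PowerGrowth s γ A) (hγ : γ < 2) (o : AntiTree s) :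
    ∃ C : ℝ, ∀ (x y : AntiTree s) (t : ℝ), 1 ≤ t → rho s x o ≤ t ^ (1 - γ / 2) →
      y ∈ ball s x (t ^ (1 - γ / 2)) → Deg s y ≤ C * t ^ γ := by
  have hA := h.const_pos
  have hγ0 := h.exponent_nonneg
  have hβ : 0 < 1 - γ / 2 := by linarith
  set L := √(2 * A * 3 ^ γ)
  have ho := height_nonneg γ o
  set M := (height γ o + 2 * L) ^ (1 - γ / 2)⁻¹
  refine ⟨2 * A * (2 * M) ^ γ, fun x y t ht hx hy => ?_⟩
  have hheight : height γ y ≤ (height γ o + 2 * L) * t ^ (1 - γ / 2) := by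
    have hLx : L * rho s x o ≤ L * t ^ (1 - γ / 2) := by gcongr
    have hLy : L * rho s x y ≤ L * t ^ (1 - γ / 2) := by gcongr; exact hy
    have hot : height γ o ≤ height γ o * t ^ (1 - γ / 2) :=
      le_mul_of_one_le_right ho (Real.one_le_rpow ht hβ.le)
    linarith [neg_le_of_abs_le (h.abs_height_sub_le_rho hγ.le x o),
      le_of_abs_le (h.abs_height_sub_le_rho hγ.le x y)]
  have hlevel : (y.1 : ℝ) + 1 ≤ M * t := by
    have := add_one_le_of_height_le hγ hheight
    rwa [Real.mul_rpow (by positivity) (by positivity),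
      Real.rpow_rpow_inv (by positivity) hβ.ne'] at this
  calc Deg s y ≤ 2 * A * ((y.1 : ℝ) + 2) ^ γ := h.deg_le y
    _ ≤ 2 * A * (2 * M * t) ^ γ := by gcongr; linarith [(y.1).cast_nonneg (α := ℝ)]
    _ = 2 * A * (2 * M) ^ γ * t ^ γ := by
      rw [Real.mul_rpow (by positivity) (by positivity), mul_assoc (2 * A)]

end PowerGrowth

open AntiTree in
theorem gammaAntiTree_mean_degree_general {s : ℕ → ℕ} {γ A : ℝ} (h : PowerGrowth s γ A)
    (hγ : γ < 2) {p : ℝ} (hp : 0 < p) (o : AntiTree s) :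
    ∃ C : ℝ, 1 ≤ C ∧ ∀ (x : AntiTree s) (r : ℝ), max 1 (rho s x o) ≤ r →
      C⁻¹ * r ^ (2 * γ / (2 - γ)) ≤ powerMean (ball s x r) (Deg s) p ∧
        powerMean (ball s x r) (Deg s) p ≤ C * r ^ (2 * γ / (2 - γ)) := by
  obtain ⟨c, hc, hlower⟩ := h.exists_mul_rpow_le_powerMean hγ hp
  obtain ⟨C, hupper⟩ := h.exists_deg_le_mul_rpow hγ o
  have hβ : 0 < 1 - γ / 2 := by linarith
  refine ⟨max 1 (max c⁻¹ C), le_max_left _ _, fun x r hr => ?_⟩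
  obtain ⟨hr1, hxo⟩ := max_le_iff.1 hr
  obtain ⟨t, ht, rfl⟩ : ∃ t : ℝ, 1 ≤ t ∧ t ^ (1 - γ / 2) = r :=
    ⟨r ^ (1 - γ / 2)⁻¹, Real.one_le_rpow hr1 (by positivity),
      Real.rpow_inv_rpow (by positivity) hβ.ne'⟩
  have hexp : (t ^ (1 - γ / 2)) ^ (2 * γ / (2 - γ)) = t ^ γ := by
    rw [← Real.rpow_mul (by positivity)]
    congr 1
    have : 2 - γ ≠ 0 := by linarith
    field_simp
  rw [hexp]
  constructor
  · refine le_trans ?_ (hlower x t (by positivity))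
    gcongr
    exact inv_le_of_inv_le₀ hc (le_max_of_le_right (le_max_left _ _))
  · refine powerMean_le (h.finite_ball hγ x _) ⟨x, self_mem_ball x (by positivity)⟩ hp
      (fun y _ => (h.deg_pos y).le) fun y hy => (hupper x y t ht hxo hy).trans ?_
    gcongr
    exact le_max_of_le_right (le_max_right _ _)

/-- **Mean degree estimate on anti-trees.**
For `γ ∈ (0,2)`, `p ∈ [1,∞)` and the `γ`-anti-tree with root `o`, counting measure
`m ≡ 1` and intrinsic degree path metric `ρ`, there is `C ≥ 1` such that for all vertices
`x` and all `r ≥ max(1, ρ(x,o))`: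
`C⁻¹ r^{2γ/(2-γ)} ≤ D_p(x,r) ≤ C r^{2γ/(2-γ)}`,
where `D_p(x,r) = ((1/#B_x(r)) ∑_{y ∈ B_x(r)} Deg(y)^p)^{1/p}`. -/
theorem gammaAntiTree_mean_degree (γ : ℝ) (hγ0 : 0 < γ) (hγ2 : γ < 2)
    (p : ℝ) (hp : 1 ≤ p) (o : AntiTree (gammaSphere γ)) (ho : o.1 = 0) :
    ∃ C : ℝ, 1 ≤ C ∧ ∀ x : AntiTree (gammaSphere γ), ∀ r : ℝ,
      max 1 (AntiTree.rho (gammaSphere γ) x o) ≤ r →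
      C⁻¹ * r ^ (2 * γ / (2 - γ)) ≤
          ((1 / ((AntiTree.ball (gammaSphere γ) x r).ncard : ℝ)) *
              ∑' y : AntiTree (gammaSphere γ),
                Set.indicator (AntiTree.ball (gammaSphere γ) x r)
                  (fun y => AntiTree.Deg (gammaSphere γ) y ^ p) y) ^ (1 / p) ∧
      ((1 / ((AntiTree.ball (gammaSphere γ) x r).ncard : ℝ)) *
              ∑' y : AntiTree (gammaSphere γ),
                Set.indicator (AntiTree.ball (gammaSphere γ) x r)
                  (fun y => AntiTree.Deg (gammaSphere γ) y ^ p) y) ^ (1 / p) ≤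
          C * r ^ (2 * γ / (2 - γ)) :=
  gammaAntiTree_mean_degree_general (powerGrowth_gammaSphere hγ0.le) hγ2 (by linarith) o
end
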